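/- Let H: R^p → R^p be a smooth injection with H(x_0) = y_0. Let B_δ(x_0) = {x : ||x − x_0||_2 ≤ δ} and S_δ(x_0) = {x : ||x − x_0||_2 = δ}. If inf_{x ∈ S_δ(x_0)} ||H(x) − y_0||_2 ≥ r, then H^{-1}(B_r(y_0)) ⊆ B_δ(x_0). -/

import Mathlib

/-!
The essential input is invariance of domain, proved here from scratch: a continuous injection of
`ℝ^p` into itself is open (`isOpenMap_of_injective`). The derivative of `H` may be singular, so the
inverse function theorem does not suffice. The argument combines the Milnor–Rogers volume proof that
the ball does not retract onto the sphere (`no_retraction`), its consequence that a field close to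
the identity on the ball has a zero (`exists_zero`), and Kulpa's perturbation argument
(`image_closedBall_mem_nhds`).

Given openness, for `r > 0` the open ball `B_r(y₀)` is connected and disjoint from the image of the
sphere, so its intersection with the image of the open ball around `x₀` is both relatively open and
relatively closed, and contains `y₀`. Hence that image contains the open ball, the compact image of
the closed ball contains its closure, and injectivity identifies the preimages.
-/

open Set Metric Filter Topology MeasureTheory Polynomial

/-- Lagrange interpolation: the value at `1` of a real polynomial of degree at most `n` is a fixed
linear combination of its values at the `n + 1` distinct nodes `v 0, …, v n`. -/
theorem exists_weights (n : ℕ) (v : ℕ → ℝ) (hv : Function.Injective v) :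
    ∃ c : ℕ → ℝ, ∀ P : ℝ[X], P.natDegree ≤ n →
      P.eval 1 = ∑ i ∈ Finset.range (n + 1), c i * P.eval (v i) := by
  refine ⟨fun i => (Lagrange.basis (Finset.range (n + 1)) v i).eval 1, fun P hP => ?_⟩
  have hd : P.degree < (Finset.range (n + 1)).card := by
    rw [Finset.card_range]
    exact (Polynomial.degree_le_of_natDegree_le hP).trans_lt (by exact_mod_cast Nat.lt_succ_self n)
  conv_lhs => rw [Lagrange.eq_interpolate (v := v) (s := Finset.range (n + 1)) hv.injOn hd]
  simp [Lagrange.interpolate_apply, Polynomial.eval_finsetSum, mul_comm]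

/-- `t ↦ det (id + t A)` is a polynomial of degree at most the dimension. -/
theorem exists_det_poly {p : ℕ}
    (A : EuclideanSpace ℝ (Fin p) →L[ℝ] EuclideanSpace ℝ (Fin p)) :
    ∃ P : ℝ[X], P.natDegree ≤ p ∧
      ∀ t : ℝ, P.eval t = (ContinuousLinearMap.id ℝ _ + t • A).det := by
  let b := (EuclideanSpace.basisFun (Fin p) ℝ).toBasis
  let M := LinearMap.toMatrix b b (A : EuclideanSpace ℝ (Fin p) →ₗ[ℝ] EuclideanSpace ℝ (Fin p))
  refine ⟨((X : ℝ[X]) • M.map C + (1 : Matrix (Fin p) (Fin p) ℝ).map C).det,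
    (natDegree_det_X_add_C_le _ _).trans (by simp), fun t => ?_⟩
  rw [ContinuousLinearMap.det, ← LinearMap.det_toMatrix b, ← coe_evalRingHom, RingHom.map_det]
  congr 1
  ext i j
  simp [M, Matrix.one_apply, LinearMap.toMatrix_apply]
  split_ifs <;> simp_all <;> ring

/-- A small Lipschitz perturbation of the identity that fixes the unit sphere and preserves the closed
unit ball is a bijection of the open unit ball: it is open by the quantitative inverse function
theorem, and its image is relatively closed in the (connected) ball. -/
theorem image_ball_eq {p : ℕ} {g : EuclideanSpace ℝ (Fin p) → EuclideanSpace ℝ (Fin p)}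
    {K : NNReal} (hg : LipschitzOnWith K g (closedBall 0 1))
    (hb : ∀ x ∈ closedBall (0 : EuclideanSpace ℝ (Fin p)) 1, ‖x + g x‖ ≤ 1)
    (hs : ∀ x ∈ sphere (0 : EuclideanSpace ℝ (Fin p)) 1, g x = 0)
    {t : ℝ} (ht0 : 0 < t) (ht1 : t < 1) (htK : t * K < 1) :
    InjOn (fun x => x + t • g x) (ball 0 1) ∧ (fun x => x + t • g x) '' ball 0 1 = ball 0 1 := by
  set f : EuclideanSpace ℝ (Fin p) → EuclideanSpace ℝ (Fin p) := fun x => x + t • g x with hf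
  have hlip : LipschitzOnWith (t.toNNReal * K) (fun x => t • g x) (closedBall 0 1) := by
    refine LipschitzOnWith.of_dist_le_mul fun x hx y hy => ?_
    rw [dist_smul₀, NNReal.coe_mul, Real.coe_toNNReal _ ht0.le, Real.norm_of_nonneg ht0.le, mul_assoc]
    exact mul_le_mul_of_nonneg_left (hg.dist_le_mul x hx y hy) ht0.le
  have hlin : ApproximatesLinearOn f
      ((ContinuousLinearEquiv.refl ℝ (EuclideanSpace ℝ (Fin p)) : _ →L[ℝ] _))
      (ball 0 1) (t.toNNReal * K) := by
    rw [ApproximatesLinearOn.approximatesLinearOn_iff_lipschitzOnWith]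
    have h : f - ((ContinuousLinearEquiv.refl ℝ (EuclideanSpace ℝ (Fin p)) :
        EuclideanSpace ℝ (Fin p) →L[ℝ] EuclideanSpace ℝ (Fin p)) :
          EuclideanSpace ℝ (Fin p) → EuclideanSpace ℝ (Fin p)) = fun x => t • g x := by
      funext x
      simp [hf]
    rw [h]
    exact hlip.mono ball_subset_closedBall
  have hcont : ContinuousOn f (closedBall 0 1) := continuousOn_id.add hlip.continuousOn
  have hc1 : t.toNNReal * K < 1 := by
    rw [← NNReal.coe_lt_coe, NNReal.coe_mul, Real.coe_toNNReal _ ht0.le]; exact_mod_cast htK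
  have hc : Subsingleton (EuclideanSpace ℝ (Fin p)) ∨ t.toNNReal * K <
      ‖((ContinuousLinearEquiv.refl ℝ (EuclideanSpace ℝ (Fin p))).symm :
        EuclideanSpace ℝ (Fin p) →L[ℝ] EuclideanSpace ℝ (Fin p))‖₊⁻¹ := by
    rcases subsingleton_or_nontrivial (EuclideanSpace ℝ (Fin p)) with h | h
    · exact Or.inl h
    · right
      have : ‖((ContinuousLinearEquiv.refl ℝ (EuclideanSpace ℝ (Fin p))).symm :
        EuclideanSpace ℝ (Fin p) →L[ℝ] EuclideanSpace ℝ (Fin p))‖₊ = 1 := by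
        ext; simp
      rw [this]; simpa using hc1
  have hopen : IsOpen (f '' ball 0 1) :=
    hlin.open_image (ContinuousLinearEquiv.toNonlinearRightInverse _) isOpen_ball hc
  have hmaps : MapsTo f (ball 0 1) (ball 0 1) := by
    intro x hx
    have h1 := hb x (ball_subset_closedBall hx)
    rw [mem_ball_zero_iff] at hx ⊢
    have : f x = (1 - t) • x + t • (x + g x) := by simp only [hf]; module
    rw [this]
    calc _ ≤ (1 - t) * ‖x‖ + t * ‖x + g x‖ := by
          refine (norm_add_le _ _).trans ?_
          rw [norm_smul, norm_smul, Real.norm_of_nonneg ht0.le, Real.norm_of_nonneg (by linarith)]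
      _ < 1 := by nlinarith
  refine ⟨hlin.injOn hc, hmaps.image_subset.antisymm ?_⟩
  have hcl : IsClosed (f '' closedBall 0 1) := ((isCompact_closedBall _ _).image_of_continuousOn hcont).isClosed
  -- the sphere is fixed pointwise, so it contributes nothing to the image inside the open ball
  have hsub : ball 0 1 ∩ f '' closedBall 0 1 ⊆ f '' ball 0 1 := by
    rintro _ ⟨hy, x, hx, rfl⟩
    refine ⟨x, ?_, rfl⟩
    by_contra hxb
    have hxs : x ∈ sphere (0 : EuclideanSpace ℝ (Fin p)) 1 := by
      rw [← closedBall_sdiff_ball]; exact ⟨hx, hxb⟩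
    apply hxb
    simpa [hf, hs x hxs] using hy
  have hconn : IsPreconnected (ball (0 : EuclideanSpace ℝ (Fin p)) 1) :=
    (convex_ball 0 1).isPreconnected
  refine (hconn.subset_left_of_subset_union hopen hcl.isOpen_compl ?_ ?_ ?_)
  · exact disjoint_compl_right.mono_left (image_mono ball_subset_closedBall)
  · intro y hy
    by_cases h : y ∈ f '' closedBall 0 1
    · exact Or.inl (hsub ⟨hy, h⟩)
    · exact Or.inr h
  · exact ⟨f 0, hmaps (by simp), 0, by simp, rfl⟩

/-- There is no `C¹` retraction of the unit ball onto the unit sphere (Milnor, Rogers). For small `t`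
the map `(1 - t) id + t f` is a bijection of the ball, so the integral of its Jacobian is the volume
of the ball. That integral is polynomial in `t`, hence equals the volume also at `t = 1`, where the
Jacobian of `f` vanishes identically. The map is taken to be defined and of norm one on the whole
space, which spares one-sided derivatives. -/
theorem no_retraction {p : ℕ} (f : EuclideanSpace ℝ (Fin p) → EuclideanSpace ℝ (Fin p))
    (hf : ContDiff ℝ 1 f) (h1 : ∀ x, ‖f x‖ = 1)
    (hs : ∀ x ∈ sphere (0 : EuclideanSpace ℝ (Fin p)) 1, f x = x) : False := by
  set g : EuclideanSpace ℝ (Fin p) → EuclideanSpace ℝ (Fin p) := fun x => f x - x with hg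
  have hgC : ContDiff ℝ 1 g := hf.sub contDiff_id
  have hgd : Differentiable ℝ g := hgC.differentiable one_ne_zero
  obtain ⟨K, hK⟩ := hgC.contDiffOn.exists_lipschitzOnWith one_ne_zero
    (convex_closedBall (0 : EuclideanSpace ℝ (Fin p)) 1) (isCompact_closedBall _ _)
  have hdetc : Continuous fun z : ℝ × EuclideanSpace ℝ (Fin p) =>
      (ContinuousLinearMap.id ℝ _ + z.1 • fderiv ℝ g z.2).det := by
    have := hgC.continuous_fderiv one_ne_zero
    exact ContinuousLinearMap.continuous_det.comp (by fun_prop)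
  have hpos : ∀ᶠ t in 𝓝 (0 : ℝ), ∀ x ∈ closedBall (0 : EuclideanSpace ℝ (Fin p)) 1,
      0 < (ContinuousLinearMap.id ℝ _ + t • fderiv ℝ g x).det := by
    refine (isCompact_closedBall _ _).eventually_forall_of_forall_eventually fun y _ => ?_
    refine hdetc.continuousAt.eventually_const_lt ?_
    simp [ContinuousLinearMap.det]
  have hsm : ∀ᶠ t in 𝓝 (0 : ℝ), t * (K : ℝ) < 1 ∧ t < 1 := by
    refine Filter.Eventually.and ?_ (eventually_lt_nhds one_pos)
    have : Continuous fun t : ℝ => t * (K : ℝ) := by fun_prop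
    exact this.continuousAt.eventually_lt_const (by simp)
  obtain ⟨τ, hτ, hτ'⟩ := Metric.eventually_nhds_iff.1 (hpos.and hsm)
  -- interpolation nodes small enough for the bijectivity regime
  let v : ℕ → ℝ := fun i => τ / (i + 2)
  have hv0 : ∀ i, 0 < v i := fun i => by positivity
  have hvτ : ∀ i, v i < τ := fun i => by
    have : (0 : ℝ) ≤ i := i.cast_nonneg
    exact div_lt_self hτ (by linarith)
  have hvinj : Function.Injective v := by
    intro i j hij
    simp only [v] at hij
    field_simp at hij
    exact_mod_cast (by linarith : (i : ℝ) = j)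
  obtain ⟨c, hc⟩ := exists_weights p v hvinj
  have hint : ∀ i, IntegrableOn (fun x => (ContinuousLinearMap.id ℝ _ + v i • fderiv ℝ g x).det)
      (ball (0 : EuclideanSpace ℝ (Fin p)) 1) volume := fun i => by
    refine IntegrableOn.mono_set ?_ ball_subset_closedBall
    refine ContinuousOn.integrableOn_compact (isCompact_closedBall _ _) (Continuous.continuousOn ?_)
    exact hdetc.comp (by fun_prop : Continuous fun x : EuclideanSpace ℝ (Fin p) => (v i, x))
  have hvol : ∀ i, ∫ x in ball (0 : EuclideanSpace ℝ (Fin p)) 1,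
      (ContinuousLinearMap.id ℝ _ + v i • fderiv ℝ g x).det
        = volume.real (ball (0 : EuclideanSpace ℝ (Fin p)) 1) := fun i => by
    obtain ⟨hp, hk, hlt⟩ := hτ' (y := v i) (by
      rw [Real.dist_eq, sub_zero, abs_of_pos (hv0 i)]; exact hvτ i)
    obtain ⟨hinj, him⟩ := image_ball_eq hK (fun x _ => by simp [hg, h1])
      (fun x hx => by simp [hg, hs x hx]) (hv0 i) hlt hk
    have := integral_image_eq_integral_abs_det_fderiv_smul volume
      (f := fun x => x + v i • g x) (f' := fun x => ContinuousLinearMap.id ℝ _ + v i • fderiv ℝ g x)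
      measurableSet_ball
      (fun x _ => ((hasFDerivAt_id x).add ((hgd x).hasFDerivAt.const_smul (v i))).hasFDerivWithinAt)
      hinj (fun _ => (1 : ℝ))
    rw [him] at this
    simp only [integral_const, smul_eq_mul, mul_one, measureReal_restrict_apply_univ] at this
    rw [this]
    refine setIntegral_congr_fun measurableSet_ball fun x hx => ?_
    exact (abs_of_pos (hp x (ball_subset_closedBall hx))).symm
  have hzero : ∀ x, (ContinuousLinearMap.id ℝ _ + (1 : ℝ) • fderiv ℝ g x).det = 0 := fun x => by
    have hfx : HasFDerivAt f (fderiv ℝ f x) x := (hf.differentiable one_ne_zero x).hasFDerivAt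
    have e : ContinuousLinearMap.id ℝ _ + (1 : ℝ) • fderiv ℝ g x = fderiv ℝ f x := by
      have : fderiv ℝ g x = fderiv ℝ f x - ContinuousLinearMap.id ℝ _ :=
        (hfx.sub (hasFDerivAt_id x)).fderiv
      rw [this]; module
    rw [e]
    by_contra hne
    have hsurj : Function.Surjective (fderiv ℝ f x) := by
      have hu : IsUnit (LinearMap.det (fderiv ℝ f x : EuclideanSpace ℝ (Fin p) →ₗ[ℝ] _)) :=
        isUnit_iff_ne_zero.2 hne
      exact (LinearEquiv.ofIsUnitDet (v := (EuclideanSpace.basisFun (Fin p) ℝ).toBasis)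
        (v' := (EuclideanSpace.basisFun (Fin p) ℝ).toBasis) (by
          rwa [LinearMap.det_toMatrix])).surjective
    obtain ⟨w, hw⟩ := hsurj (f x)
    -- differentiating `⟪f, f⟫ = 1` shows that the range of the derivative is orthogonal to `f x`
    have hd := (hfx.inner ℝ hfx)
    have hconst : (fun y => inner ℝ (f y) (f y)) = fun _ => (1 : ℝ) := by
      ext y; rw [real_inner_self_eq_norm_sq, h1]; norm_num
    rw [hconst] at hd
    have h0 := congrArg (fun L => L w) (hd.unique (hasFDerivAt_const (1 : ℝ) x))
    simp [hw, h1] at h0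
  have key : ∀ x, ∑ i ∈ Finset.range (p + 1),
      c i * (ContinuousLinearMap.id ℝ _ + v i • fderiv ℝ g x).det = 0 := fun x => by
    obtain ⟨P, hP, hPe⟩ := exists_det_poly (fderiv ℝ g x)
    rw [← hzero x, ← hPe 1, hc P hP]
    simp [hPe]
  have hsum : ∑ i ∈ Finset.range (p + 1), c i = 1 := by
    simpa using (hc 1 (by simp)).symm
  have h0 : ∫ x in ball (0 : EuclideanSpace ℝ (Fin p)) 1, ∑ i ∈ Finset.range (p + 1),
      c i * (ContinuousLinearMap.id ℝ _ + v i • fderiv ℝ g x).det = 0 := by simp [key]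
  rw [integral_finsetSum _ fun i _ => (hint i).const_mul _] at h0
  simp only [integral_const_mul, hvol] at h0
  rw [← Finset.sum_mul, hsum, one_mul] at h0
  have : 0 < volume.real (ball (0 : EuclideanSpace ℝ (Fin p)) 1) :=
    ENNReal.toReal_pos (measure_ball_pos _ _ one_pos).ne' measure_ball_lt_top.ne
  exact this.ne' h0

/-- A form of Brouwer's theorem: a continuous vector field on the closed unit ball that is uniformly
close to the identity has a zero. A zero-free field could be smoothed and made equal to the identity
near the sphere, and normalizing it would give a `C¹` retraction onto the sphere. -/
theorem exists_zero {p : ℕ} (F : EuclideanSpace ℝ (Fin p) → EuclideanSpace ℝ (Fin p))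
    (hF : ContinuousOn F (closedBall 0 1))
    (hFx : ∀ x ∈ closedBall (0 : EuclideanSpace ℝ (Fin p)) 1, ‖F x - x‖ ≤ 1 / 3) :
    ∃ x ∈ closedBall (0 : EuclideanSpace ℝ (Fin p)) 1, F x = 0 := by
  by_contra! hne
  obtain ⟨F₁, hF₁⟩ := ContinuousMap.exists_restrict_eq isClosed_closedBall
    (⟨(closedBall 0 1).domRestrict F, hF.domRestrict⟩ :
      C(closedBall (0 : EuclideanSpace ℝ (Fin p)) 1, EuclideanSpace ℝ (Fin p)))
  have hF₁' : ∀ x ∈ closedBall (0 : EuclideanSpace ℝ (Fin p)) 1, F₁ x = F x := fun x hx =>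
    congrArg (fun f => f ⟨x, hx⟩) hF₁
  obtain ⟨x₁, hx₁, hmin⟩ := (isCompact_closedBall (0 : EuclideanSpace ℝ (Fin p)) 1).exists_isMinOn
    ⟨0, by simp⟩ hF.norm
  have hm : 0 < ‖F x₁‖ := norm_pos_iff.2 (hne x₁ hx₁)
  obtain ⟨F₂, hF₂s, hF₂, -⟩ := F₁.continuous.exists_contDiff_approx 1
    (ε := fun _ => min ‖F x₁‖ (1 / 12)) continuous_const (fun _ => by positivity)
  have hF₂d : ∀ x ∈ closedBall (0 : EuclideanSpace ℝ (Fin p)) 1,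
      ‖F₂ x - F x‖ < ‖F x₁‖ ∧ ‖F₂ x - F x‖ < 1 / 12 := fun x hx => by
    have := hF₂ x
    rwa [hF₁' x hx, dist_eq_norm, lt_min_iff] at this
  -- cut off so that the field is the identity outside the ball of radius `3 / 4`
  let χ : ContDiffBump (0 : EuclideanSpace ℝ (Fin p)) := ⟨1 / 2, 3 / 4, by norm_num, by norm_num⟩
  let F₃ : EuclideanSpace ℝ (Fin p) → EuclideanSpace ℝ (Fin p) := fun x => x + χ x • (F₂ x - x)
  have hF₃s : ContDiff ℝ 1 F₃ :=
    contDiff_id.add (χ.contDiff.smul (hF₂s.sub contDiff_id))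
  have hout : ∀ x, 3 / 4 ≤ ‖x‖ → F₃ x = x := fun x hx => by
    simp [F₃, χ.zero_of_le_dist (x := x) (by simpa [dist_zero_right] using hx)]
  have hF₃ne : ∀ x, F₃ x ≠ 0 := fun x h0 => by
    rcases le_total (3 / 4) ‖x‖ with h | h
    · rw [hout x h] at h0
      rw [h0, norm_zero] at h; norm_num at h
    have hx : x ∈ closedBall (0 : EuclideanSpace ℝ (Fin p)) 1 := by
      rw [mem_closedBall_zero_iff]; linarith
    obtain ⟨ha, hb⟩ := hF₂d x hx
    rcases le_total ‖x‖ (1 / 2) with h2 | h2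
    · have h1 : χ x = 1 := χ.one_of_mem_closedBall (mem_closedBall_zero_iff.2 h2)
      have h3 : F₂ x = 0 := by simpa [F₃, h1] using h0
      have := isMinOn_iff.1 hmin x hx
      rw [h3, zero_sub, norm_neg] at ha
      linarith
    · have h4 : ‖F₂ x - x‖ < 1 / 2 := by
        have := norm_sub_le_norm_sub_add_norm_sub (F₂ x) (F x) x
        linarith [hFx x hx]
      have h5 : x = -(χ x • (F₂ x - x)) := eq_neg_of_add_eq_zero_left h0
      have h6 : ‖x‖ ≤ ‖F₂ x - x‖ := by
        conv_lhs => rw [h5, norm_neg, norm_smul, Real.norm_of_nonneg χ.nonneg]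
        exact mul_le_of_le_one_left (norm_nonneg _) χ.le_one
      linarith
  refine no_retraction (fun x => ‖F₃ x‖⁻¹ • F₃ x) ?_ ?_ ?_
  · exact ((hF₃s.norm ℝ hF₃ne).inv fun x => norm_ne_zero_iff.2 (hF₃ne x)).smul hF₃s
  · intro x
    rw [norm_smul, norm_inv, norm_norm, inv_mul_cancel₀ (norm_ne_zero_iff.2 (hF₃ne x))]
  · intro x hx
    rw [mem_sphere_zero_iff_norm] at hx
    simp [hout x (by rw [hx]; norm_num), hx]

/-- The topological core: a continuous injection sends the closed unit ball to a neighbourhood of the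
image of its centre. Otherwise let `G` extend the inverse of `H`, and let `c` be a point near `H 0`
outside the image. Pushing the image radially off a small ball around `c` and then applying a smooth
approximation of `G` that avoids `0` on the boundary sphere gives a zero-free map close to the
identity on the ball, contradicting `exists_zero`. -/
theorem image_closedBall_mem_nhds {p : ℕ}
    (H : EuclideanSpace ℝ (Fin p) → EuclideanSpace ℝ (Fin p))
    (hH : Continuous H) (hinj : Function.Injective H) :
    H '' closedBall 0 1 ∈ 𝓝 (H 0) := by
  by_contra hnot
  have he : IsClosedEmbedding ((closedBall (0 : EuclideanSpace ℝ (Fin p)) 1).domRestrict H) :=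
    (hH.continuousOn.domRestrict).isClosedEmbedding hinj.injOn.injective
  obtain ⟨G, hG⟩ := ContinuousMap.exists_extension' he
    (⟨Subtype.val, continuous_subtype_val⟩ :
      C(closedBall (0 : EuclideanSpace ℝ (Fin p)) 1, EuclideanSpace ℝ (Fin p)))
  have hGH : ∀ x ∈ closedBall (0 : EuclideanSpace ℝ (Fin p)) 1, G (H x) = x := fun x hx =>
    congrFun hG ⟨x, hx⟩
  have hG0 : ∀ᶠ y in 𝓝 (H 0), ‖G y‖ < 1 / 10 := by
    refine G.continuous.norm.continuousAt.eventually_lt_const ?_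
    simp only [hGH 0 (by simp)]; norm_num
  obtain ⟨ε', hε', hGε'⟩ := Metric.eventually_nhds_iff.1 hG0
  obtain ⟨ε, hε, rfl⟩ : ∃ ε > 0, ε' = 2 * ε := ⟨ε' / 2, by positivity, by ring⟩
  obtain ⟨c, hcε, hcK⟩ : ∃ c, dist c (H 0) < ε ∧ c ∉ H '' closedBall 0 1 := by
    by_contra! h
    exact hnot (Metric.mem_nhds_iff.2 ⟨ε, hε, fun c hc => h c hc⟩)
  have hGc : ∀ y, ‖y - c‖ ≤ ε → ‖G y‖ < 1 / 10 := fun y hy => hGε' (by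
    have := dist_triangle y c (H 0)
    rw [dist_eq_norm y c] at this
    linarith)
  -- a positive lower bound for `G` on the part of the image away from `c`
  obtain ⟨m, hm0, hm1, hm⟩ : ∃ m : ℝ, 0 < m ∧ m ≤ 1 / 10 ∧
      ∀ x ∈ closedBall (0 : EuclideanSpace ℝ (Fin p)) 1, ε ≤ ‖H x - c‖ → m ≤ ‖x‖ := by
    have hopen : ∀ᶠ x in 𝓝 (0 : EuclideanSpace ℝ (Fin p)), ‖H x - c‖ < ε := by
      refine (hH.sub continuous_const).norm.continuousAt.eventually_lt_const ?_
      simpa [← dist_eq_norm, dist_comm] using hcε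
    obtain ⟨m, hm0, hm⟩ := Metric.eventually_nhds_iff.1 hopen
    refine ⟨min m (1 / 10), by positivity, min_le_right _ _, fun x _ hx => ?_⟩
    by_contra! hlt
    exact (hm (by rw [dist_zero_right]; exact hlt.trans_le (min_le_left _ _))).not_ge hx
  obtain ⟨P₀, hP₀s, hP₀, -⟩ := G.continuous.exists_contDiff_approx 1
    (ε := fun _ => m / 2) continuous_const (fun _ => by positivity)
  have hnull : volume (P₀ '' sphere c ε) = 0 :=
    addHaar_image_eq_zero_of_differentiableOn_of_addHaar_eq_zero volume
      (hP₀s.differentiable one_ne_zero).differentiableOn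
      (Measure.addHaar_sphere_of_ne_zero volume c hε.ne')
  -- a small generic translation moves `0` off the null set `P₀ '' sphere c ε`
  obtain ⟨w, hw, hwP⟩ : ∃ w ∈ ball (0 : EuclideanSpace ℝ (Fin p)) (m / 2),
      w ∉ P₀ '' sphere c ε := by
    by_contra! h
    exact (measure_ball_pos volume (0 : EuclideanSpace ℝ (Fin p)) (half_pos hm0)).ne'
      (measure_mono_null h hnull)
  rw [mem_ball_zero_iff] at hw
  have hPG : ∀ y, ‖P₀ y - w - G y‖ < m := fun y => by
    have h1 := hP₀ y
    rw [dist_eq_norm] at h1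
    have h2 : P₀ y - w - G y = (P₀ y - G y) - w := by abel
    rw [h2]
    exact (norm_sub_le _ _).trans_lt (by linarith)
  -- radial projection of the punctured ball around `c` onto its boundary sphere
  let Φ : EuclideanSpace ℝ (Fin p) → EuclideanSpace ℝ (Fin p) :=
    fun y => c + max (ε / ‖y - c‖) 1 • (y - c)
  have hHc : ∀ x ∈ closedBall (0 : EuclideanSpace ℝ (Fin p)) 1, 0 < ‖H x - c‖ := fun x hx =>
    norm_pos_iff.2 (sub_ne_zero.2 fun h => hcK ⟨x, hx, h⟩)
  have hΦ1 : ∀ x ∈ closedBall (0 : EuclideanSpace ℝ (Fin p)) 1, ε ≤ ‖H x - c‖ →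
      Φ (H x) = H x := fun x hx h => by
    have : ε / ‖H x - c‖ ≤ 1 := (div_le_one (hHc x hx)).2 h
    simp [Φ, max_eq_right this]
  have hΦ2 : ∀ x ∈ closedBall (0 : EuclideanSpace ℝ (Fin p)) 1, ‖H x - c‖ ≤ ε →
      ‖Φ (H x) - c‖ = ε := fun x hx h => by
    have h1 : 1 ≤ ε / ‖H x - c‖ := (one_le_div (hHc x hx)).2 h
    simp only [Φ, max_eq_left h1, add_sub_cancel_left, norm_smul]
    rw [Real.norm_of_nonneg (by positivity), div_mul_cancel₀ _ (hHc x hx).ne']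
  have hcont : ContinuousOn (fun x => P₀ (Φ (H x)) - w) (closedBall 0 1) := by
    have hΦc : ContinuousOn (fun x => Φ (H x)) (closedBall 0 1) := by
      refine continuousOn_const.add (ContinuousOn.smul (ContinuousOn.sup
        (ContinuousOn.div continuousOn_const (by fun_prop) fun x hx => (hHc x hx).ne')
        continuousOn_const) (by fun_prop))
    exact (hP₀s.continuous.comp_continuousOn hΦc).sub continuousOn_const
  obtain ⟨x, hx, hx0⟩ := exists_zero _ hcont fun x hx => by
    rcases le_total ε ‖H x - c‖ with h | h
    · rw [hΦ1 x hx h]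
      have := hPG (H x)
      rw [hGH x hx] at this
      linarith
    · have h1 := hPG (Φ (H x))
      have h2 := hGc _ (hΦ2 x hx h).le
      have h3 := hGc _ h
      rw [hGH x hx] at h3
      have h4 : P₀ (Φ (H x)) - w - x = (P₀ (Φ (H x)) - w - G (Φ (H x))) + G (Φ (H x)) - x := by abel
      rw [h4]
      refine (norm_sub_le _ _).trans ?_
      have := norm_add_le (P₀ (Φ (H x)) - w - G (Φ (H x))) (G (Φ (H x)))
      linarith
  rcases le_total ε ‖H x - c‖ with h | h
  · have h1 := hPG (H x)
    rw [hΦ1 x hx h] at hx0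
    rw [hx0, hGH x hx, zero_sub, norm_neg] at h1
    exact h1.not_ge (hm x hx h)
  · exact hwP ⟨Φ (H x), mem_sphere_iff_norm.2 (hΦ2 x hx h), sub_eq_zero.1 hx0⟩

/-- Invariance of domain, for maps defined on the whole space. -/
theorem isOpenMap_of_injective {p : ℕ}
    (H : EuclideanSpace ℝ (Fin p) → EuclideanSpace ℝ (Fin p))
    (hH : Continuous H) (hinj : Function.Injective H) : IsOpenMap H := by
  refine isOpenMap_iff_nhds_le.2 fun a s hs => ?_
  obtain ⟨ρ, hρ, hsub⟩ := Metric.nhds_basis_closedBall.mem_iff.1 (mem_map.1 hs)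
  have := image_closedBall_mem_nhds (fun x => H (a + ρ • x)) (hH.comp (by fun_prop))
    fun x y hxy => by simpa [hρ.ne'] using hinj hxy
  simp only [smul_zero, add_zero] at this
  refine mem_of_superset this ?_
  rintro _ ⟨x, hx, rfl⟩
  refine hsub ?_
  rw [mem_closedBall_zero_iff] at hx
  rw [mem_closedBall_iff_norm, add_sub_cancel_left, norm_smul, Real.norm_of_nonneg hρ.le]
  exact mul_le_of_le_one_right hρ.le hx

/-- Inversion lemma (Chen 1999): let `H : ℝ^p → ℝ^p` be a smooth injection with
`H(x₀) = y₀`. If `‖H(x) − y₀‖ ≥ r` for every `x` on the sphere `‖x − x₀‖ = δ`, then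
`H⁻¹(B_r(y₀)) ⊆ B_δ(x₀)`. -/
theorem stmt7 {p : ℕ} (H : EuclideanSpace ℝ (Fin p) → EuclideanSpace ℝ (Fin p))
    (hsmooth : ContDiff ℝ (⊤ : ℕ∞) H) (hinj : Function.Injective H)
    (x₀ y₀ : EuclideanSpace ℝ (Fin p)) (hx₀ : H x₀ = y₀)
    (δ r : ℝ) (hδ : 0 < δ)
    (hsphere : ∀ x, ‖x - x₀‖ = δ → r ≤ ‖H x - y₀‖) :
    H ⁻¹' Metric.closedBall y₀ r ⊆ Metric.closedBall x₀ δ := by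
  have hH := hsmooth.continuous
  intro x hx
  rcases lt_trichotomy r 0 with hr | rfl | hr
  · simp [closedBall_eq_empty.2 hr] at hx
  · have : x = x₀ := hinj (by simpa [hx₀] using hx)
    simp [this, hδ.le]
  have hcl : IsClosed (H '' closedBall x₀ δ) := ((isCompact_closedBall _ _).image hH).isClosed
  have hopen : IsOpen (H '' ball x₀ δ) := isOpenMap_of_injective H hH hinj _ isOpen_ball
  have hsub : ball y₀ r ⊆ H '' ball x₀ δ := by
    refine (convex_ball y₀ r).isPreconnected.subset_left_of_subset_union hopen hcl.isOpen_compl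
      (disjoint_compl_right.mono_left (image_mono ball_subset_closedBall)) ?_
      ⟨y₀, mem_ball_self hr, x₀, mem_ball_self hδ, hx₀⟩
    intro y hy
    by_cases h : y ∈ H '' closedBall x₀ δ
    · obtain ⟨z, hz, rfl⟩ := h
      refine Or.inl ⟨z, mem_ball.2 (lt_of_le_of_ne hz fun h => ?_), rfl⟩
      exact (hsphere z (by rwa [← dist_eq_norm])).not_gt (mem_ball_iff_norm.1 hy)
    · exact Or.inr h
  have hsub' : closedBall y₀ r ⊆ H '' closedBall x₀ δ := by
    rw [← closure_ball y₀ hr.ne']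
    exact closure_minimal (hsub.trans (image_mono ball_subset_closedBall)) hcl
  exact (hinj.mem_set_image).1 (hsub' hx)
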